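/- For all natural numbers m and n, −(1/(2π))·∫_{−1}^{1}∫_{−1}^{1} ln|x−y| · pₘ(x) · pₙ(y) dx dy equals (n+1)·π/4 if m = n, and equals 0 if m ≠ n, where pₙ(x) := d/dx[√(1−x²)·Uₙ(x)]. (This is the eigenvalue relation N_{0,ω}Uₙ = ((n+1)/2)·Uₙ for the weighted Laplace hypersingular operator, expressed through its defining variational double integral.) -/

import Mathlib

/-!
Up to the factor `-(n + 1)`, `pₙ` is the density of `Tₙ₊₁` with respect to the Chebyshev weight
`1 / √(1 - x²)`. With `x = cos θ`, `y = cos φ`, the kernel splits as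
`log |x - y| = κ(φ - θ) + κ(φ + θ) - log 2`, where `κ(s) = log |2 sin (s / 2)|` is the logarithmic
kernel of the unit circle. Since `κ` is even and `2π`-periodic, convolution with it multiplies
`cos (n φ)` by the `n`-th Fourier coefficient of `κ`, which is computed by integration by parts.
Hence the weighted single layer potential maps `Tₙ` to `-(π / n) Tₙ`, and the theorem reduces to
the orthogonality of the Chebyshev polynomials of the first kind.
-/

open Real Set MeasureTheory intervalIntegral

/-- The `n`-th Chebyshev polynomial of the second kind, as a real function. -/
noncomputable def chebU (n : ℕ) : ℝ → ℝ := fun x => (Polynomial.Chebyshev.U ℝ n).eval x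

/-- `pₙ(x) = d/dx [√(1-x²) Uₙ(x)]`. -/
noncomputable def pCheb (n : ℕ) : ℝ → ℝ :=
  fun x => deriv (fun t => Real.sqrt (1 - t ^ 2) * chebU n t) x

section Parity

variable {E : Type*} [NormedAddCommGroup E] [NormedSpace ℝ E] {f : ℝ → E}

theorem intervalIntegral_neg_self_of_odd (hf : f.Odd) (a : ℝ) : ∫ x in -a..a, f x = 0 := by
  have h := intervalIntegral.integral_comp_neg f (a := -a) (b := a)
  simp only [hf.eq, intervalIntegral.integral_neg, neg_neg] at h
  have := IsAddTorsionFree.of_isTorsionFree ℝ E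
  exact neg_eq_self.1 h

theorem intervalIntegral_neg_self_of_even (hf : f.Even) {a : ℝ}
    (hint : IntervalIntegrable f volume 0 a) :
    ∫ x in -a..a, f x = (2 : ℝ) • ∫ x in 0..a, f x := by
  have hint' : IntervalIntegrable f volume (-a) 0 := by
    simpa [hf.eq] using ((IntervalIntegrable.iff_comp_neg (f := f)).1 hint).symm
  have h := intervalIntegral.integral_comp_neg f (a := 0) (b := a)
  simp only [hf.eq, neg_zero] at h
  rw [← integral_add_adjacent_intervals hint' hint, ← h, two_smul]

end Parity

theorem integral_comp_sub_mul_cos_of_even_periodic {K : ℝ → ℝ} (heven : K.Even)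
    (hper : K.Periodic (2 * π)) (hint : IntervalIntegrable K volume (-π) π) (n : ℤ) (θ : ℝ) :
    ∫ φ in -π..π, K (φ - θ) * cos (n * φ) = (∫ s in -π..π, K s * cos (n * s)) * cos (n * θ) := by
  have hperF : Function.Periodic (fun s => K s * cos (n * (s + θ))) (2 * π) := fun s => by
    have h : n * (s + 2 * π + θ) = n * (s + θ) + n * (2 * π) := by ring
    simp only [hper s, h, cos_add_int_mul_two_pi]
  have hodd : Function.Odd fun s => K s * sin (n * s) := fun s => by simp [heven.eq]
  calc ∫ φ in -π..π, K (φ - θ) * cos (n * φ)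
      = ∫ s in -π - θ..-π - θ + 2 * π, K s * cos (n * (s + θ)) := by
        simpa [show π - θ = -π - θ + 2 * π by ring] using
          intervalIntegral.integral_comp_sub_right (fun s => K s * cos (n * (s + θ))) θ
            (a := -π) (b := π)
    _ = ∫ s in -π..π, K s * cos (n * (s + θ)) := by
        rw [hperF.intervalIntegral_add_eq _ (-π), show -π + 2 * π = π by ring]
    _ = ∫ s in -π..π, (K s * cos (n * s) * cos (n * θ) - K s * sin (n * s) * sin (n * θ)) := by
        simp only [mul_add, cos_add]
        congr with s
        ring
    _ = _ := by
        rw [intervalIntegral.integral_sub, intervalIntegral.integral_mul_const,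
          intervalIntegral.integral_mul_const, intervalIntegral_neg_self_of_odd hodd, zero_mul,
          sub_zero]
        · exact (hint.mul_continuousOn (by fun_prop)).mul_const _
        · exact (hint.mul_continuousOn (by fun_prop)).mul_const _

/-- The logarithmic kernel of the unit circle: `logChord s` is the logarithm of the chord length
`|exp (i s) - 1|`, with the junk value `0` where the chord degenerates. -/
noncomputable def logChord (s : ℝ) : ℝ := log |2 * sin (s / 2)|

theorem logChord_even : logChord.Even := fun s => by simp [logChord, neg_div]

theorem logChord_periodic : logChord.Periodic (2 * π) := fun s => by
  simp [logChord, add_div]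

theorem intervalIntegrable_logChord (a b : ℝ) : IntervalIntegrable logChord volume a b := by
  have h : AnalyticOnNhd ℝ (fun s => 2 * sin (s / 2)) (uIcc a b) := fun s _ => by fun_prop
  exact h.meromorphicOn.intervalIntegrable_log_norm

theorem intervalIntegrable_logChord_sub (a b θ : ℝ) :
    IntervalIntegrable (fun φ => logChord (φ - θ)) volume a b := by
  simpa using (intervalIntegrable_logChord (a - θ) (b - θ)).comp_sub_right θ

theorem intervalIntegrable_log_abs_cos_sub_cos (a b θ : ℝ) :
    IntervalIntegrable (fun φ => log |cos θ - cos φ|) volume a b := by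
  have h : AnalyticOnNhd ℝ (fun φ => cos θ - cos φ) (uIcc a b) := fun φ _ => by fun_prop
  exact h.meromorphicOn.intervalIntegrable_log_norm

theorem hasDerivAt_logChord {s : ℝ} (hs : sin (s / 2) ≠ 0) :
    HasDerivAt logChord (cot (s / 2) / 2) s := by
  have h := (((hasDerivAt_id s).div_const 2).sin.const_mul 2).log (mul_ne_zero two_ne_zero hs)
  have hlog : logChord = fun s => log (2 * sin (s / 2)) := funext fun s => log_abs _
  rw [hlog, cot_eq_cos_div_sin]
  convert! h using 1
  simp only [id]
  field_simp

theorem continuous_sin_half_mul_logChord : Continuous fun s => sin (s / 2) * logChord s := by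
  have h : Continuous fun s : ℝ => 2 * sin (s / 2) * log (2 * sin (s / 2)) :=
    continuous_mul_log.comp (by fun_prop)
  convert h.div_const 2 using 2 with s
  rw [logChord, log_abs]
  ring

theorem log_abs_cos_sub_cos {θ φ : ℝ} (h : cos θ ≠ cos φ) :
    log |cos θ - cos φ| = logChord (φ - θ) + logChord (φ + θ) - log 2 := by
  have hprod : 2 * (cos θ - cos φ) = 2 * sin ((φ - θ) / 2) * (2 * sin ((φ + θ) / 2)) := by
    rw [cos_sub_cos, ← neg_sub φ θ, neg_div, sin_neg, add_comm φ θ]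
    ring
  have hne := mul_ne_zero two_ne_zero (sub_ne_zero.2 h)
  have hlog := log_mul two_ne_zero (sub_ne_zero.2 h)
  rw [hprod, log_mul (left_ne_zero_of_mul (hprod ▸ hne)) (right_ne_zero_of_mul (hprod ▸ hne))]
    at hlog
  simp only [logChord, log_abs]
  linarith

theorem ae_cos_ne_cos (θ : ℝ) : ∀ᵐ φ, cos θ ≠ cos φ := by
  have hsub : {φ | cos θ = cos φ} ⊆
      range (fun k : ℤ => 2 * k * π + θ) ∪ range fun k : ℤ => 2 * k * π - θ := fun φ hφ => by
    obtain ⟨k, rfl | rfl⟩ := cos_eq_cos_iff.1 hφ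
    · exact .inl ⟨k, rfl⟩
    · exact .inr ⟨k, rfl⟩
  exact (((countable_range _).union (countable_range _)).mono hsub).ae_notMem volume

open Polynomial.Chebyshev

theorem one_add_mul_eval_U_sub_eval_U (n : ℤ) (x : ℝ) :
    (1 + x) * ((U ℝ (n + 1)).eval x - (U ℝ n).eval x)
      = (T ℝ (n + 1)).eval x + (T ℝ (n + 2)).eval x := by
  have h₁ := congrArg (Polynomial.eval x) (U_eq_X_mul_U_add_T ℝ n)
  have h₂ := congrArg (Polynomial.eval x) (T_eq_X_mul_U_sub_U ℝ n)
  simp only [Polynomial.eval_add, Polynomial.eval_sub, Polynomial.eval_mul,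
    Polynomial.eval_X] at h₁ h₂
  linear_combination h₁ - h₂

theorem integral_one_add_mul_eval_U_measureT (n : ℕ) :
    ∫ x, (1 + x) * (U ℝ n).eval x ∂measureT = π := by
  have hpoly {p : Polynomial ℝ} : Integrable (fun x => p.eval x) measureT :=
    integrable_measureT p.continuousOn
  have hmul {p : Polynomial ℝ} : Integrable (fun x => (1 + x) * p.eval x) measureT :=
    integrable_measureT (by fun_prop)
  induction n with
  | zero =>
    have h := integral_add (hpoly (p := T ℝ 0)) (hpoly (p := T ℝ 1))
    rw [integral_eval_T_real_measureT_zero,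
      integral_eval_T_real_measureT_of_ne_zero one_ne_zero, add_zero] at h
    simpa using h
  | succ n ih =>
    have hrec (x : ℝ) : (1 + x) * (U ℝ (n + 1 : ℕ)).eval x = (1 + x) * (U ℝ n).eval x
        + ((T ℝ (n + 1)).eval x + (T ℝ (n + 2)).eval x) := by
      rw [← one_add_mul_eval_U_sub_eval_U, Nat.cast_succ]
      ring
    simp only [hrec]
    rw [integral_add hmul (hpoly.fun_add hpoly), integral_add hpoly hpoly, ih,
      integral_eval_T_real_measureT_of_ne_zero (by omega),
      integral_eval_T_real_measureT_of_ne_zero (by omega), add_zero, add_zero]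

theorem sin_int_mul_eq_eval_U (n : ℤ) (s : ℝ) :
    sin (n * s) = 2 * (U ℝ (n - 1)).eval (cos s) * cos (s / 2) * sin (s / 2) := by
  have hsin := sin_two_mul (s / 2)
  have hU := U_real_cos s (n - 1)
  rw [mul_div_cancel₀ s two_ne_zero] at hsin
  rw [hsin, Int.cast_sub, Int.cast_one, sub_add_cancel] at hU
  rw [← hU]
  ring

theorem sin_int_mul_mul_cot_half (n : ℤ) {s : ℝ} (hs : sin (s / 2) ≠ 0) :
    sin (n * s) * cot (s / 2) = (1 + cos s) * (U ℝ (n - 1)).eval (cos s) := by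
  have hcos := cos_two_mul (s / 2)
  rw [mul_div_cancel₀ s two_ne_zero] at hcos
  rw [sin_int_mul_eq_eval_U, cot_eq_cos_div_sin]
  field_simp
  rw [hcos]
  ring

theorem continuous_sin_int_mul_mul_logChord (n : ℤ) :
    Continuous fun s => sin (n * s) * logChord s := by
  simp only [sin_int_mul_eq_eval_U, mul_assoc _ (sin _)]
  exact Continuous.mul (by fun_prop) continuous_sin_half_mul_logChord

theorem hasDerivAt_sin_int_mul_mul_logChord (n : ℤ) {s : ℝ} (hs : sin (s / 2) ≠ 0) :
    HasDerivAt (fun s => sin (n * s) * logChord s)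
      (n * (logChord s * cos (n * s)) + (1 + cos s) * (U ℝ (n - 1)).eval (cos s) / 2) s := by
  have hsin : HasDerivAt (fun s : ℝ => sin (n * s)) (cos (n * s) * n) s := by
    simpa using ((hasDerivAt_id s).const_mul (n : ℝ)).sin
  convert! hsin.mul (hasDerivAt_logChord hs) using 1
  rw [← sin_int_mul_mul_cot_half n hs]
  ring

theorem integral_logChord_mul_cos {n : ℕ} (hn : n ≠ 0) :
    ∫ s in (0 : ℝ)..π, logChord s * cos (n * s) = -π / (2 * n) := by
  have hlog : IntervalIntegrable (fun s => logChord s * cos (n * s)) volume 0 π :=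
    (intervalIntegrable_logChord _ _).mul_continuousOn (by fun_prop)
  have hpoly : IntervalIntegrable
      (fun s => (1 + cos s) * (U ℝ (n - 1)).eval (cos s) / 2) volume 0 π :=
    Continuous.intervalIntegrable (by fun_prop) _ _
  have hmean : ∫ s in (0 : ℝ)..π, (1 + cos s) * (U ℝ (n - 1)).eval (cos s) = π := by
    rw [← integral_measureT_eq_integral_cos (f := fun x => (1 + x) * (U ℝ (n - 1)).eval x),
      ← Nat.cast_pred (Nat.pos_of_ne_zero hn)]
    exact integral_one_add_mul_eval_U_measureT (n - 1)
  have hparts := integral_eq_sub_of_hasDerivAt_of_le pi_pos.le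
    (continuous_sin_int_mul_mul_logChord n).continuousOn
    (fun s hs => hasDerivAt_sin_int_mul_mul_logChord n
      (sin_pos_of_pos_of_lt_pi (by linarith [hs.1]) (by linarith [hs.1, hs.2])).ne')
    ((hlog.const_mul n).add hpoly)
  simp only [Int.cast_natCast, mul_zero, sin_zero, sin_nat_mul_pi, zero_mul, sub_zero] at hparts
  rw [intervalIntegral.integral_add (hlog.const_mul n) hpoly, intervalIntegral.integral_const_mul,
    intervalIntegral.integral_div, hmean] at hparts
  field_simp
  linarith

theorem integral_logChord_sub_mul_cos {n : ℕ} (hn : n ≠ 0) (θ : ℝ) :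
    ∫ φ in -π..π, logChord (φ - θ) * cos (n * φ) = -π / n * cos (n * θ) := by
  have heven : Function.Even fun s => logChord s * cos (n * s) := fun s => by
    simp [logChord_even.eq]
  have h := integral_comp_sub_mul_cos_of_even_periodic logChord_even logChord_periodic
    (intervalIntegrable_logChord _ _) n θ
  rw [Int.cast_natCast] at h
  rw [h, intervalIntegral_neg_self_of_even heven
    ((intervalIntegrable_logChord _ _).mul_continuousOn (by fun_prop)),
    integral_logChord_mul_cos hn, smul_eq_mul]
  field_simp

theorem integral_log_abs_cos_sub_cos_mul_cos {n : ℕ} (hn : n ≠ 0) (θ : ℝ) :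
    ∫ φ in (0 : ℝ)..π, log |cos θ - cos φ| * cos (n * φ) = -π / n * cos (n * θ) := by
  have hlog : IntervalIntegrable (fun φ => log |cos θ - cos φ| * cos (n * φ)) volume 0 π :=
    (intervalIntegrable_log_abs_cos_sub_cos _ _ θ).mul_continuousOn (by fun_prop)
  have hchord (θ : ℝ) :
      IntervalIntegrable (fun φ => logChord (φ - θ) * cos (n * φ)) volume (-π) π :=
    (intervalIntegrable_logChord_sub _ _ θ).mul_continuousOn (by fun_prop)
  have hcos : IntervalIntegrable (fun φ => log 2 * cos (n * φ)) volume (-π) π :=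
    Continuous.intervalIntegrable (by fun_prop) _ _
  have hcos_zero : ∫ φ in -π..π, cos (n * φ) = 0 := by
    rw [intervalIntegral.integral_comp_mul_left cos (Nat.cast_ne_zero.2 hn)]
    simp
  have heven : Function.Even fun φ => log |cos θ - cos φ| * cos (n * φ) := fun φ => by simp
  have hsplit : ∫ φ in -π..π, log |cos θ - cos φ| * cos (n * φ) = ∫ φ in -π..π,
      (logChord (φ - θ) * cos (n * φ) + logChord (φ - -θ) * cos (n * φ)
        - log 2 * cos (n * φ)) := by
    refine intervalIntegral.integral_congr_ae ?_
    filter_upwards [ae_cos_ne_cos θ] with φ hφ _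
    rw [log_abs_cos_sub_cos hφ, sub_neg_eq_add]
    ring
  rw [intervalIntegral_neg_self_of_even heven hlog,
    intervalIntegral.integral_sub ((hchord θ).add (hchord (-θ))) hcos,
    intervalIntegral.integral_add (hchord θ) (hchord (-θ)), intervalIntegral.integral_const_mul,
    hcos_zero, integral_logChord_sub_mul_cos hn, integral_logChord_sub_mul_cos hn, mul_neg,
    cos_neg, smul_eq_mul] at hsplit
  linarith

theorem integral_log_abs_sub_mul_eval_T_measureT {n : ℕ} (hn : n ≠ 0) {x : ℝ}
    (hx : x ∈ Icc (-1) 1) :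
    ∫ y, log |x - y| * (T ℝ n).eval y ∂measureT = -π / n * (T ℝ n).eval x := by
  rw [← cos_arccos hx.1 hx.2, integral_measureT_eq_integral_cos]
  simpa only [T_real_cos, Int.cast_natCast] using
    integral_log_abs_cos_sub_cos_mul_cos hn (arccos x)

theorem hasDerivAt_sqrt_one_sub_sq_mul_eval_U (n : ℤ) {x : ℝ} (hx : x ∈ Ioo (-1) 1) :
    HasDerivAt (fun t => √(1 - t ^ 2) * (U ℝ n).eval t)
      (-(n + 1) * ((T ℝ (n + 1)).eval x * √(1 - x ^ 2)⁻¹)) x := by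
  have hpos : 0 < 1 - x ^ 2 := by nlinarith [hx.1, hx.2]
  have hsqrt : √(1 - x ^ 2) ≠ 0 := (sqrt_pos.2 hpos).ne'
  have hU := congrArg (Polynomial.eval x) (add_one_mul_T_eq_poly_in_U (R := ℝ) n)
  simp only [Polynomial.eval_mul, Polynomial.eval_add, Polynomial.eval_sub, Polynomial.eval_pow,
    Polynomial.eval_X, Polynomial.eval_one, Polynomial.eval_intCast] at hU
  convert! ((((hasDerivAt_pow 2 x).const_sub 1).sqrt hpos.ne').mul ((U ℝ n).hasDerivAt x)) using 1
  rw [sqrt_inv]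
  field_simp
  rw [sq_sqrt hpos.le]
  push_cast
  linear_combination -2 * hU

theorem integral_mul_pCheb (f : ℝ → ℝ) (n : ℕ) :
    ∫ x in (-1 : ℝ)..1, f x * pCheb n x
      = -(n + 1) * ∫ x, f x * (T ℝ (n + 1 : ℕ)).eval x ∂measureT := by
  rw [integral_measureT, ← intervalIntegral.integral_const_mul]
  refine integral_congr_Ioo_of_le (by norm_num) fun x hx => ?_
  have hp : pCheb n x = _ := (hasDerivAt_sqrt_one_sub_sq_mul_eval_U n hx).deriv
  simp only [hp]
  push_cast
  ring

theorem integral_log_abs_sub_mul_pCheb (n : ℕ) {x : ℝ} (hx : x ∈ Icc (-1) 1) :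
    ∫ y in (-1 : ℝ)..1, log |x - y| * pCheb n y = π * (T ℝ (n + 1 : ℕ)).eval x := by
  rw [integral_mul_pCheb, integral_log_abs_sub_mul_eval_T_measureT n.succ_ne_zero hx]
  push_cast
  field_simp

/-- The eigenvalue relation `N_{0,ω} Uₙ = ((n+1)/2) Uₙ` for the weighted Laplace
hypersingular operator, in variational form: the double integral
`-(1/(2π)) ∬ ln|x-y| pₘ(x) pₙ(y) dx dy` equals `(n+1)π/4` if `m = n` and `0` else. -/
theorem weighted_hypersingular_chebU_eigen (m n : ℕ) :
    (-(1 / (2 * π)) * ∫ x in (-1 : ℝ)..1, ∫ y in (-1 : ℝ)..1,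
        Real.log |x - y| * pCheb m x * pCheb n y)
      = if m = n then ((n : ℝ) + 1) * π / 4 else 0 := by
  have hinner : ∀ x ∈ uIcc (-1 : ℝ) 1, ∫ y in (-1 : ℝ)..1, log |x - y| * pCheb m x * pCheb n y
      = π * ((T ℝ (n + 1 : ℕ)).eval x * pCheb m x) := fun x hx => by
    rw [uIcc_of_le (by norm_num)] at hx
    simp only [mul_right_comm _ (pCheb m x)]
    rw [intervalIntegral.integral_mul_const, integral_log_abs_sub_mul_pCheb n hx, mul_assoc]
  rw [intervalIntegral.integral_congr hinner, intervalIntegral.integral_const_mul,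
    integral_mul_pCheb]
  split_ifs with hmn
  · rw [hmn, integral_T_real_mul_self_measureT_of_ne_zero n.succ_ne_zero]
    field_simp
    ring
  · rw [integral_eval_T_real_mul_eval_T_real_measureT_of_ne (by omega)]
    simp
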